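/- Fix an integer d ≥ 1, let x ∈ 𝒳_d, and let y, z ∈ 𝒴_d(x). Then xy and xz are conjugate in G if and only if they are conjugate in the centralizer C_G(x); moreover, if h ∈ G satisfies h⁻¹(xy)h = xz, then h ∈ C_G(x) and h⁻¹ y h = z. -/

import Mathlib

open Polynomial

/-- For `g ∈ GL(V)` with `n = dim V`, the subspace `V_g = range((g - 1)^n)`. -/
noncomputable def primaryRange {F V : Type} [Field F] [AddCommGroup V] [Module F V]
    (g : (Module.End F V)ˣ) : Submodule F V :=
  LinearMap.range (((g : Module.End F V) - 1) ^ Module.finrank F V)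

/-- For `g ∈ GL(V)` with `n = dim V`, the subspace `V_g⁰ = ker((g - 1)^n)`. -/
noncomputable def primaryKer {F V : Type} [Field F] [AddCommGroup V] [Module F V]
    (g : (Module.End F V)ˣ) : Submodule F V :=
  LinearMap.ker (((g : Module.End F V) - 1) ^ Module.finrank F V)

/-- The set `𝒳_d` of `d`-elements of `GL(V)`: those `g` fixing `V_g⁰` pointwise such
that every monic irreducible factor of the characteristic polynomial of `g` other
than `X - 1` has degree divisible by `d`. -/
noncomputable def dElements (F V : Type) [Field F] [AddCommGroup V] [Module F V]
    [FiniteDimensional F V] (d : ℕ) : Set (Module.End F V)ˣ :=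
  {g | (∀ v ∈ primaryKer g, (g : Module.End F V) v = v) ∧
    ∀ f : Polynomial F, f.Monic → Irreducible f →
      f ∣ LinearMap.charpoly (g : Module.End F V) → f ≠ X - 1 → d ∣ f.natDegree}

/-- For `x ∈ 𝒳_d`, the set `𝒴_d(x)`: those `y ∈ GL(V)` fixing `V_x` pointwise,
mapping `V_x⁰` into itself, and such that every monic irreducible factor of the
characteristic polynomial of `y` other than `X - 1` has degree not divisible by `d`. -/
noncomputable def dRegular (F V : Type) [Field F] [AddCommGroup V] [Module F V]
    [FiniteDimensional F V] (d : ℕ) (x : (Module.End F V)ˣ) :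
    Set (Module.End F V)ˣ :=
  {y | (∀ v ∈ primaryRange x, (y : Module.End F V) v = v) ∧
    (∀ v ∈ primaryKer x, (y : Module.End F V) v ∈ primaryKer x) ∧
    ∀ f : Polynomial F, f.Monic → Irreducible f →
      f ∣ LinearMap.charpoly (y : Module.End F V) → f ≠ X - 1 → ¬ d ∣ f.natDegree}

/-- If `S` and `T` agree on an `S`-stable subspace `W`, so do `p(S)` and `p(T)`. -/
theorem aeval_apply_eq_of_eqOn {F V : Type} [Field F] [AddCommGroup V] [Module F V]
    {S T : Module.End F V} {W : Submodule F V} (hS : ∀ v ∈ W, S v ∈ W)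
    (hST : ∀ v ∈ W, T v = S v) (p : F[X]) :
    ∀ v ∈ W, aeval T p v = aeval S p v := by
  induction p using Polynomial.induction_on' with
  | add p q hp hq => intro v hv; simp [hp v hv, hq v hv]
  | monomial n a =>
    intro v hv
    have key : ∀ m : ℕ, (T ^ m) v = (S ^ m) v ∧ (S ^ m) v ∈ W := by
      intro m
      induction m with
      | zero => simpa using hv
      | succ m ih =>
        rw [pow_succ', pow_succ', Module.End.mul_apply, Module.End.mul_apply, ih.1]
        exact ⟨hST _ ih.2, hS _ ih.2⟩
    simp [aeval_monomial, Module.algebraMap_end_apply, (key n).1]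

theorem eq_zero_of_isCoprime_of_aeval {F V : Type} [Field F] [AddCommGroup V] [Module F V]
    {T : Module.End F V} {p q : F[X]} (h : IsCoprime p q) {v : V}
    (hp : aeval T p v = 0) (hq : aeval T q v = 0) : v = 0 := by
  obtain ⟨a, b, hab⟩ := h
  have := congrArg (fun r => aeval T r v) hab
  simpa [hp, hq] using this.symm

theorem apply_aeval_eq_of_intertwine {F V : Type} [Field F] [AddCommGroup V] [Module F V]
    {A B h : Module.End F V} (hh : h * B = A * h) (p : F[X]) (v : V) :
    h (aeval B p v) = aeval A p (h v) := by
  have hpow : ∀ m : ℕ, h * B ^ m = A ^ m * h := fun m =>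
    ((show SemiconjBy h B A from hh).pow_right m)
  induction p using Polynomial.induction_on' with
  | add p q hp hq => simp [hp, hq]
  | monomial n a =>
    have := LinearMap.congr_fun (hpow n) v
    simp only [Module.End.mul_apply] at this
    simp [aeval_monomial, Module.algebraMap_end_apply, this]

theorem isCompl_primaryRange_primaryKer {F V : Type} [Field F] [AddCommGroup V] [Module F V]
    [FiniteDimensional F V] (g : (Module.End F V)ˣ) :
    IsCompl (primaryRange g) (primaryKer g) := by
  have hdisj : Disjoint (primaryRange g) (primaryKer g) := by
    rw [Submodule.disjoint_def]
    rintro _ ⟨w, rfl⟩ hw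
    have hw' : w ∈ LinearMap.ker (((g : Module.End F V) - 1) ^
        (Module.finrank F V + Module.finrank F V)) := by
      rw [LinearMap.mem_ker, pow_add]
      exact hw
    rwa [Module.End.ker_pow_eq_ker_pow_finrank_of_le (Nat.le_add_left _ _)] at hw'
  refine ⟨hdisj, codisjoint_iff.mpr (Submodule.eq_top_of_disjoint _ _ ?_ hdisj)⟩
  exact (LinearMap.finrank_range_add_finrank_ker _).ge

theorem apply_mem_primaryRange {F V : Type} [Field F] [AddCommGroup V] [Module F V]
    (g : (Module.End F V)ˣ) : ∀ v ∈ primaryRange g, (g : Module.End F V) v ∈ primaryRange g := by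
  rintro _ ⟨w, rfl⟩
  have hc : Commute (g : Module.End F V) (((g : Module.End F V) - 1) ^ Module.finrank F V) :=
    ((Commute.refl _).sub_right (Commute.one_right _)).pow_right _
  exact ⟨(g : Module.End F V) w, (LinearMap.congr_fun hc.eq w).symm⟩

/-- The part of the characteristic polynomial of `g` prime to `X - 1` annihilates `V_g`. -/
theorem exists_dvd_charpoly_aeval_primaryRange {F V : Type} [Field F] [AddCommGroup V]
    [Module F V] [FiniteDimensional F V] (g : (Module.End F V)ˣ) :
    ∃ p : F[X], p ∣ LinearMap.charpoly (g : Module.End F V) ∧ ¬ (X - 1) ∣ p ∧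
      ∀ v ∈ primaryRange g, aeval (g : Module.End F V) p v = 0 := by
  classical
  have hne := (LinearMap.charpoly_monic (g : Module.End F V)).ne_zero
  obtain ⟨p, hp, hnd⟩ := exists_eq_pow_rootMultiplicity_mul_and_not_dvd _ hne (1 : F)
  rw [C_1] at hp hnd
  refine ⟨p, Dvd.intro_left _ hp.symm, hnd, ?_⟩
  rintro _ ⟨w, rfl⟩
  have hle : rootMultiplicity 1 (LinearMap.charpoly (g : Module.End F V)) ≤
      Module.finrank F V := by
    rw [← LinearMap.charpoly_natDegree (g : Module.End F V), ← count_roots]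
    exact (Multiset.count_le_card _ _).trans (card_roots' _)
  obtain ⟨m, hm⟩ := Nat.exists_eq_add_of_le hle
  have hdvd : LinearMap.charpoly (g : Module.End F V) ∣ p * (X - 1) ^ Module.finrank F V := by
    refine ⟨(X - 1) ^ m, ?_⟩
    conv_rhs => rw [hp]
    rw [hm, pow_add]
    ring
  have hzero : aeval (g : Module.End F V) (p * (X - 1) ^ Module.finrank F V) = 0 :=
    aeval_eq_zero_of_dvd_aeval_eq_zero hdvd (LinearMap.aeval_self_charpoly _)
  simpa using LinearMap.congr_fun hzero w

/-- Any `h` intertwining `x * z` with `x * y` commutes with `x`. -/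
theorem commute_of_intertwine {F V : Type} [Field F] [AddCommGroup V] [Module F V]
    [FiniteDimensional F V] {d : ℕ} {x y z h : (Module.End F V)ˣ} (hx : x ∈ dElements F V d)
    (hy : y ∈ dRegular F V d x) (hz : z ∈ dRegular F V d x)
    (hh : h * (x * z) = x * y * h) : h * x = x * h := by
  classical
  obtain ⟨hxK, hxd⟩ := hx
  obtain ⟨p, hpx, hpX, hpW⟩ := exists_dvd_charpoly_aeval_primaryRange x
  have hcompl := isCompl_primaryRange_primaryKer x
  have hxW := apply_mem_primaryRange x
  have hcop : ∀ w ∈ dRegular F V d x,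
      IsCoprime p (LinearMap.charpoly (w : Module.End F V)) := by
    rintro w ⟨-, -, hwd⟩
    refine isCoprime_of_irreducible_dvd
      (fun h0 => (LinearMap.charpoly_monic (w : Module.End F V)).ne_zero h0.2) ?_
    intro f hf hfp hfw
    have hassoc : Associated (normalize f) f := normalize_associated f
    have hmonic : (normalize f).Monic := monic_normalize hf.ne_zero
    have hfp' := hassoc.dvd.trans hfp
    have hne : normalize f ≠ X - 1 := fun h0 => hpX (h0 ▸ hfp')
    have hirr := hassoc.symm.irreducible hf
    exact hwd _ hmonic hirr (hassoc.dvd.trans hfw) hne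
      (hxd _ hmonic hirr (hfp'.trans hpx) hne)
  have agreeW : ∀ w ∈ dRegular F V d x, ∀ v ∈ primaryRange x,
      (x * w : Module.End F V) v = (x : Module.End F V) v := by
    intro w hw v hv
    rw [Module.End.mul_apply, hw.1 v hv]
  have agreeK : ∀ w ∈ dRegular F V d x, ∀ v ∈ primaryKer x,
      (x * w : Module.End F V) v = (w : Module.End F V) v := by
    intro w hw v hv
    rw [Module.End.mul_apply, hxK _ (hw.2.1 v hv)]
  have hhE : (h : Module.End F V) * (x * z) = x * y * h := by
    simpa using congrArg Units.val hh
  have split : ∀ (q : F[X]) (v : V), aeval (x * y : Module.End F V) q v = 0 →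
      ∃ a ∈ primaryRange x, ∃ b ∈ primaryKer x, a + b = v ∧
        aeval (x : Module.End F V) q a = 0 ∧ aeval (y : Module.End F V) q b = 0 := by
    intro q v hq
    obtain ⟨a, ha, b, hb, rfl⟩ := Submodule.mem_sup.mp
      (hcompl.sup_eq_top ▸ Submodule.mem_top : v ∈ primaryRange x ⊔ primaryKer x)
    rw [map_add, aeval_apply_eq_of_eqOn hxW (agreeW y hy) q a ha,
      aeval_apply_eq_of_eqOn hy.2.1 (agreeK y hy) q b hb] at hq
    have h1 := aeval_apply_smul_mem_of_le_comap ha q _ hxW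
    have h2 := aeval_apply_smul_mem_of_le_comap hb q _ hy.2.1
    have h3 : aeval (x : Module.End F V) q a = 0 :=
      Submodule.disjoint_def.mp hcompl.disjoint _ h1
        (by rw [eq_neg_of_add_eq_zero_left hq]; exact neg_mem h2)
    exact ⟨a, ha, b, hb, rfl, h3, by simpa [h3] using hq⟩
  have hW : ∀ v ∈ primaryRange x, (h : Module.End F V) v ∈ primaryRange x := by
    intro v hv
    have hA : aeval (x * y : Module.End F V) p ((h : Module.End F V) v) = 0 := by
      rw [← apply_aeval_eq_of_intertwine hhE, aeval_apply_eq_of_eqOn hxW (agreeW z hz) p v hv,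
        hpW v hv, map_zero]
    obtain ⟨a, ha, b, -, hab, -, hb⟩ := split _ _ hA
    have hb0 : b = 0 := eq_zero_of_isCoprime_of_aeval (hcop y hy) hb
      (by rw [LinearMap.aeval_self_charpoly, LinearMap.zero_apply])
    rwa [← hab, hb0, add_zero]
  have hK : ∀ v ∈ primaryKer x, (h : Module.End F V) v ∈ primaryKer x := by
    intro v hv
    have hA : aeval (x * y : Module.End F V) (LinearMap.charpoly (z : Module.End F V))
        ((h : Module.End F V) v) = 0 := by
      rw [← apply_aeval_eq_of_intertwine hhE, aeval_apply_eq_of_eqOn hz.2.1 (agreeK z hz) _ v hv,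
        LinearMap.aeval_self_charpoly, LinearMap.zero_apply, map_zero]
    obtain ⟨a, ha, b, hb, hab, ha', -⟩ := split _ _ hA
    have ha0 : a = 0 := eq_zero_of_isCoprime_of_aeval (hcop z hz) (hpW a ha) ha'
    rwa [← hab, ha0, zero_add]
  ext v
  obtain ⟨a, ha, b, hb, rfl⟩ := Submodule.mem_sup.mp
    (hcompl.sup_eq_top ▸ Submodule.mem_top : v ∈ primaryRange x ⊔ primaryKer x)
  have hhA : (h : Module.End F V) ((x : Module.End F V) a) =
      (x : Module.End F V) ((h : Module.End F V) a) := by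
    have := LinearMap.congr_fun hhE a
    rwa [Module.End.mul_apply, agreeW z hz a ha, Module.End.mul_apply,
      agreeW y hy _ (hW a ha)] at this
  simp only [Units.val_mul, Module.End.mul_apply, map_add]
  rw [hhA, hxK b hb, hxK _ (hK b hb)]

/-- For `d ≥ 1`, `x ∈ 𝒳_d` and `y, z ∈ 𝒴_d(x)`: `xy` and `xz`
are conjugate in `G = GL(V)` if and only if they are conjugate in `C_G(x)`;
moreover any `h ∈ G` with `h⁻¹(xy)h = xz` satisfies `h ∈ C_G(x)` and `h⁻¹ y h = z`. -/
theorem conj_in_G_iff_conj_in_centralizer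
    (F V : Type) [Field F] [Fintype F] [AddCommGroup V] [Module F V]
    [FiniteDimensional F V] (hn : 1 ≤ Module.finrank F V)
    (d : ℕ) (hd : 1 ≤ d)
    (x : (Module.End F V)ˣ) (hx : x ∈ dElements F V d)
    (y z : (Module.End F V)ˣ)
    (hy : y ∈ dRegular F V d x) (hz : z ∈ dRegular F V d x) :
    ((∃ h : (Module.End F V)ˣ, h⁻¹ * (x * y) * h = x * z) ↔
      ∃ h ∈ Subgroup.centralizer ({x} : Set (Module.End F V)ˣ),
        h⁻¹ * (x * y) * h = x * z) ∧
    ∀ h : (Module.End F V)ˣ, h⁻¹ * (x * y) * h = x * z →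
      h * x = x * h ∧ h⁻¹ * y * h = z := by
  have main : ∀ h : (Module.End F V)ˣ, h⁻¹ * (x * y) * h = x * z →
      h * x = x * h ∧ h⁻¹ * y * h = z := by
    intro h hh
    have hc : h * x = x * h := commute_of_intertwine hx hy hz (by rw [← hh]; group)
    refine ⟨hc, mul_left_cancel (a := x) ?_⟩
    rw [← hh, ← mul_assoc, ← mul_assoc, ← mul_assoc]
    congr 2
    rw [mul_inv_eq_iff_eq_mul, mul_assoc, ← hc, inv_mul_cancel_left]
  refine ⟨⟨fun ⟨h, hh⟩ => ⟨h, ?_, hh⟩, fun ⟨h, _, hh⟩ => ⟨h, hh⟩⟩, main⟩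
  exact Subgroup.mem_centralizer_singleton_iff.mpr (main h hh).1
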